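/- For all t, t' > 0 and all θ, θ' ∈ ℝ one has ⟨r(t,θ) − r(t',θ'), ν(t,θ)⟩ = cos α · sin α · t' · (1 − cos(θ' − θ)). Consequently, whenever r(t,θ) ≠ r(t',θ'), the kernel satisfies the symmetry relation t · K^{Γ_α}(t,θ,t',θ') = t' · K^{Γ_α}(t',θ',t,θ). -/

import Mathlib

open Real

/-- Parametrization of the infinite straight cone of opening angle `2α`. -/
noncomputable def coneParam (α t θ : ℝ) : EuclideanSpace ℝ (Fin 3) :=
  !₂[sin α * t * cos θ, sin α * t * sin θ, cos α * t]

/-- Outward unit normal of the cone. -/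
noncomputable def coneNormal (α θ : ℝ) : EuclideanSpace ℝ (Fin 3) :=
  !₂[cos α * cos θ, cos α * sin θ, -sin α]

/-- The layer-potential kernel of the infinite straight cone. -/
noncomputable def coneKernel (α t θ t' θ' : ℝ) : ℝ :=
  (inner ℝ (coneParam α t θ - coneParam α t' θ') (coneNormal α θ) : ℝ) /
    ‖coneParam α t' θ' - coneParam α t θ‖ ^ 3

theorem cone_inner_aux (α t t' θ θ' : ℝ) :
    (inner ℝ (coneParam α t θ - coneParam α t' θ') (coneNormal α θ) : ℝ)
        = cos α * sin α * t' * (1 - cos (θ' - θ)) := by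
  simp only [coneParam, coneNormal, PiLp.inner_apply, Fin.sum_univ_three, cos_sub]
  simp
  linear_combination (cos α * sin α * t) * sin_sq_add_cos_sq θ

/-- For the infinite straight cone: `⟨r(t,θ) − r(t',θ'), ν(t,θ)⟩ =
cos α · sin α · t' · (1 − cos(θ' − θ))`, and consequently, whenever
`r(t,θ) ≠ r(t',θ')`, the kernel satisfies the symmetry
`t · K^{Γ_α}(t,θ,t',θ') = t' · K^{Γ_α}(t',θ',t,θ)`. -/
theorem cone_kernel_symmetry (α : ℝ) (hα0 : 0 < α) (hαπ : α < π) (hα2 : α ≠ π / 2)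
    (t t' θ θ' : ℝ) (ht : 0 < t) (ht' : 0 < t') :
    (inner ℝ (coneParam α t θ - coneParam α t' θ') (coneNormal α θ) : ℝ)
        = cos α * sin α * t' * (1 - cos (θ' - θ)) ∧
    (coneParam α t θ ≠ coneParam α t' θ' →
      t * coneKernel α t θ t' θ' = t' * coneKernel α t' θ' t θ) := by
  refine ⟨cone_inner_aux α t t' θ θ', fun _ => ?_⟩
  have h : cos (θ - θ') = cos (θ' - θ) := by rw [← cos_neg, neg_sub]
  unfold coneKernel
  rw [cone_inner_aux, cone_inner_aux, h, norm_sub_rev (coneParam α t' θ')]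
  ring
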